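/- Let 0 ≤ i ≤ k ≤ n and let v₁, v₂ ∈ R^{C([n],i)} satisfy ⟨v₁, v₂⟩ = 0, P↓_{n,i} v₁ = 0 and P↓_{n,i} v₂ = 0. Then ⟨P↑_{n,i,k} v₁, P↑_{n,i,k} v₂⟩ = 0. -/

import Mathlib

/-!
The argument is the representation theory of `sl₂` on the Boolean lattice. Extending a function on
a slice by zero to all finsets of `Fin n` turns the up and down operators into operators `cubeUp`
and `cubeDown` on functions of finsets, which are adjoint (`sum_cubeUp_mul`) and satisfy
`cubeDown ∘ cubeUp - cubeUp ∘ cubeDown = n - 2 |t|` (`cubeDown_cubeUp`). Hence, if `cubeDown F = 0`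
and `F` lives on the `i`-th level, then `cubeDown (cubeUp^[d+1] F)` is a multiple of `cubeUp^[d] F`
with a factor depending only on `n`, `i` and `d` (`cubeDown_iterate`). Moving one `cubeUp` across the
inner product at a time, `⟨cubeUp^[d] F, cubeUp^[d] G⟩` is therefore a multiple of `⟨F, G⟩`.
-/

open scoped Classical

/-- The slice `C([n],k)`: vectors in `{0,1}^n` with exactly `k` ones. -/
abbrev Slice (n k : ℕ) :=
  {x : Fin n → Bool // (Finset.univ.filter fun i => x i = true).card = k}

/-- The up operator `P↑_{n,k}`. -/
noncomputable def upOp (n k : ℕ) : Matrix (Slice n (k + 1)) (Slice n k) ℝ :=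
  Matrix.of fun x y => if ∀ i, y.1 i = true → x.1 i = true then (1 : ℝ) else 0

/-- The down operator `P↓_{n,k}` (the transpose of `P↑_{n,k-1}`); it is the zero
matrix for `k = 0`. -/
noncomputable def downOp (n k : ℕ) : Matrix (Slice n (k - 1)) (Slice n k) ℝ :=
  Matrix.of fun x y => if 0 < k ∧ ∀ i, x.1 i = true → y.1 i = true then (1 : ℝ) else 0

noncomputable def upPathAux (n i : ℕ) : (d : ℕ) → Matrix (Slice n (i + d)) (Slice n i) ℝ
  | 0 => show Matrix (Slice n (i + 0)) (Slice n i) ℝ from (1 : Matrix (Slice n i) (Slice n i) ℝ)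
  | d + 1 => upOp n (i + d) * upPathAux n i d

/-- The iterated up operator `P↑_{n,i,k} = P↑_{n,k-1} ⋯ P↑_{n,i}`. -/
noncomputable def upPath (n i k : ℕ) : Matrix (Slice n k) (Slice n i) ℝ :=
  if h : i ≤ k then
    cast (by rw [Nat.add_sub_cancel' h]) (upPathAux n i (k - i))
  else 0

/-- `P∨_{n,k} = P↑_{n,k-1} P↓_{n,k}`. -/
noncomputable def upDown (n k : ℕ) : Matrix (Slice n k) (Slice n k) ℝ :=
  if h : 1 ≤ k then
    cast (by rw [Nat.sub_add_cancel h]) (upOp n (k - 1) * downOp n k)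
  else 0

/-- `P∧_{n,k} = P↓_{n,k+1} P↑_{n,k}`. -/
noncomputable def downUp (n k : ℕ) : Matrix (Slice n k) (Slice n k) ℝ :=
  downOp n (k + 1) * upOp n k

/-- `S ∈ H_{n,k}`: `S ⊆ {1,…,n}`, `|S| ≤ k`, and the `j`-th smallest element
(1-indexed) is at least `2j`. -/
def IsH (n k : ℕ) (S : Finset ℕ) : Prop :=
  S ⊆ Finset.Icc 1 n ∧ S.card ≤ k ∧
    ∀ j, j < S.card → 2 * (j + 1) ≤ (S.sort (· ≤ ·)).getD j 0

lemma wcast_false {n : ℕ} (x : Fin (n + 1) → Bool) (h : ¬ x (Fin.last n) = true) :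
    (Finset.univ.filter fun i : Fin n => x (Fin.castSucc i) = true).card
      = (Finset.univ.filter fun i : Fin (n + 1) => x i = true).card := by
  rw [Finset.card_filter, Finset.card_filter, Fin.sum_univ_castSucc]
  simp [h]

lemma wcast_true {n : ℕ} (x : Fin (n + 1) → Bool) (h : x (Fin.last n) = true) :
    (Finset.univ.filter fun i : Fin n => x (Fin.castSucc i) = true).card + 1
      = (Finset.univ.filter fun i : Fin (n + 1) => x i = true).card := by
  rw [Finset.card_filter, Finset.card_filter, Fin.sum_univ_castSucc]
  simp [h]

/-- Forgetting the last coordinate of `x` when it equals `0`. -/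
def dropLast {n m : ℕ} (x : Slice (n + 1) m) (h : ¬ x.1 (Fin.last n) = true) : Slice n m :=
  ⟨fun i => x.1 (Fin.castSucc i), by
    show (Finset.univ.filter fun i : Fin n => x.1 (Fin.castSucc i) = true).card = m
    rw [wcast_false x.1 h]; exact x.2⟩

/-- Forgetting the last coordinate of `x` when it equals `1`. -/
def dropLastT {n m : ℕ} (x : Slice (n + 1) m) (h : x.1 (Fin.last n) = true) : Slice n (m - 1) :=
  ⟨fun i => x.1 (Fin.castSucc i), by
    show (Finset.univ.filter fun i : Fin n => x.1 (Fin.castSucc i) = true).card = m - 1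
    have h1 := wcast_true x.1 h
    have h2 := x.2
    omega⟩

/-- The vector `χ_{n,S}` on the slice `C([n],|S|)`, defined recursively. -/
noncomputable def chi : (n : ℕ) → (S : Finset ℕ) → Slice n S.card → ℝ
  | 0, _ => fun _ => 1
  | n + 1, S =>
    if hS : n + 1 ∈ S then
      fun x =>
        if hx : x.1 (Fin.last n) = true then
          chi n (S.erase (n + 1)) ⟨(dropLastT x hx).1, by
            show (Finset.univ.filter fun i : Fin n => x.1 (Fin.castSucc i) = true).card
              = (S.erase (n + 1)).card
            rw [Finset.card_erase_of_mem hS]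
            exact (dropLastT x hx).2⟩
        else
          -(∑ y : Slice n (S.erase (n + 1)).card,
              (if ∀ i, y.1 i = true → (dropLast x hx).1 i = true then (1 : ℝ) else 0) *
                chi n (S.erase (n + 1)) y) / ((n : ℝ) + 1 - 2 * S.card + 1)
    else
      fun x =>
        if hx : x.1 (Fin.last n) = true then 0
        else chi n S (dropLast x hx)

/-- The basis vector `P↑_{n,|S|,k} χ_{n,S}` of `R^{C([n],k)}`. -/
noncomputable def basisVec (n k : ℕ) (S : Finset ℕ) : Slice n k → ℝ :=
  (upPath n S.card k).mulVec (chi n S)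

/-- The Fourier coefficient `f̂(S)`, equal to `0` when `S ∉ H_{n,min{k,n-k}}`. -/
noncomputable def fourierSlice (n k : ℕ) (f : Slice n k → ℝ) (S : Finset ℕ) : ℝ :=
  if IsH n (min k (n - k)) S then
    (∑ x, f x * basisVec n k S x) / Real.sqrt (∑ x, basisVec n k S x ^ 2)
  else 0

/-- The Hamming weight of `z ∈ {0,1}^t`. -/
def wt {t : ℕ} (z : Fin t → Bool) : ℕ :=
  (Finset.univ.filter fun i => z i = true).card

/-- The concatenation `x ∘ z ∈ {0,1}^n` of `x ∈ {0,1}^{n-t}` with `z ∈ {0,1}^t`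
(with `z` occupying the last `t` coordinates). -/
def catFun (n t : ℕ) (x : Fin (n - t) → Bool) (z : Fin t → Bool) : Fin n → Bool :=
  fun i =>
    if h : (i : ℕ) < n - t then x ⟨i, h⟩
    else if h2 : (i : ℕ) - (n - t) < t then z ⟨(i : ℕ) - (n - t), h2⟩
    else false

/-- The restriction `f_z : C([n-t], k-|z|) → ℝ`, `f_z(x) = f(x ∘ z)`; it is
(the everywhere-zero function on) the empty function when `|z| > k`. -/
noncomputable def restrict (n k t : ℕ) (f : Slice n k → ℝ) (z : Fin t → Bool) :
    Slice (n - t) (k - wt z) → ℝ :=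
  fun x =>
    if h : (Finset.univ.filter fun i => catFun n t x.1 z i = true).card = k then
      f ⟨catFun n t x.1 z, h⟩
    else 0

/-- The Fourier coefficient `f̂_z(S)` of the restriction `f_z`. -/
noncomputable def fourierSliceRestrict (n k t : ℕ) (f : Slice n k → ℝ) (z : Fin t → Bool)
    (S : Finset ℕ) : ℝ :=
  fourierSlice (n - t) (k - wt z) (restrict n k t f z) S

/-- The adjacency matrix `A_{n,k}` of the Johnson graph. -/
noncomputable def johnsonAdj (n k : ℕ) : Matrix (Slice n k) (Slice n k) ℝ :=
  Matrix.of fun x y =>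
    if (Finset.univ.filter fun i => x.1 i ≠ y.1 i).card = 2 then (1 : ℝ) else 0

/-! ### Points of the slice as finsets and extension by zero -/

/-- The set of coordinates at which a point of the slice equals `1`. -/
def Slice.supp {n m : ℕ} (x : Slice n m) : Finset (Fin n) :=
  Finset.univ.filter fun i => x.1 i = true

lemma Slice.mem_supp {n m : ℕ} (x : Slice n m) (i : Fin n) : i ∈ x.supp ↔ x.1 i = true := by
  simp [Slice.supp]

lemma Slice.card_supp {n m : ℕ} (x : Slice n m) : x.supp.card = m := x.2

lemma Slice.supp_injective {n m : ℕ} : Function.Injective (Slice.supp (n := n) (m := m)) := by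
  intro x y h
  apply Subtype.ext
  funext i
  have h1 : i ∈ x.supp ↔ i ∈ y.supp := by rw [h]
  rw [Slice.mem_supp, Slice.mem_supp] at h1
  exact Bool.eq_iff_iff.2 h1

lemma Slice.exists_supp {n m : ℕ} (t : Finset (Fin n)) (ht : t.card = m) :
    ∃ x : Slice n m, x.supp = t :=
  ⟨⟨fun i => decide (i ∈ t), by simpa using ht⟩, by ext i; simp [Slice.supp]⟩

lemma Slice.le_iff {n m l : ℕ} (x : Slice n m) (y : Slice n l) :
    (∀ i, x.1 i = true → y.1 i = true) ↔ x.supp ⊆ y.supp := by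
  simp only [Finset.subset_iff, Slice.mem_supp]

/-- Extension of a function on the slice `C([n],m)` by zero to all finsets of `Fin n`, where points
of the slice are identified with their supports. -/
noncomputable def zeroExt {n m : ℕ} (f : Slice n m → ℝ) (t : Finset (Fin n)) : ℝ :=
  if h : ∃ x : Slice n m, x.supp = t then f h.choose else 0

lemma zeroExt_supp {n m : ℕ} (f : Slice n m → ℝ) (x : Slice n m) : zeroExt f x.supp = f x := by
  have h : ∃ y : Slice n m, y.supp = x.supp := ⟨x, rfl⟩
  rw [zeroExt, dif_pos h, Slice.supp_injective h.choose_spec]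

lemma zeroExt_of_card_ne {n m : ℕ} (f : Slice n m → ℝ) (t : Finset (Fin n)) (h : t.card ≠ m) :
    zeroExt f t = 0 := by
  rw [zeroExt, dif_neg]
  rintro ⟨x, rfl⟩
  exact h x.card_supp

/-! ### The up and down operators on functions of finsets -/

/-- The up operator on functions of finsets. -/
def cubeUp {n : ℕ} (F : Finset (Fin n) → ℝ) (t : Finset (Fin n)) : ℝ :=
  ∑ j ∈ t, F (t.erase j)

/-- The down operator on functions of finsets. -/
def cubeDown {n : ℕ} (F : Finset (Fin n) → ℝ) (t : Finset (Fin n)) : ℝ :=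
  ∑ j ∈ tᶜ, F (insert j t)

lemma zeroExt_upOp {n m : ℕ} (f : Slice n m → ℝ) :
    zeroExt ((upOp n m).mulVec f) = cubeUp (zeroExt f) := by
  funext t
  by_cases ht : t.card = m + 1
  · obtain ⟨x, rfl⟩ := Slice.exists_supp t ht
    rw [zeroExt_supp, cubeUp,
      ← Finset.sum_image (s := x.supp) (f := zeroExt f) (Finset.erase_injOn x.supp)]
    simp only [Matrix.mulVec, dotProduct, upOp, Matrix.of_apply, Slice.le_iff, ite_mul, one_mul,
      zero_mul]
    rw [← Finset.sum_filter]
    refine Finset.sum_nbij Slice.supp ?_ Slice.supp_injective.injOn ?_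
      fun y _ => (zeroExt_supp f y).symm
    · intro y hy
      obtain ⟨a, ha, hay⟩ := Finset.exists_eq_insert_iff.2
        ⟨(Finset.mem_filter.1 hy).2, by rw [y.card_supp, ht]⟩
      exact Finset.mem_image.2 ⟨a, by simp [← hay], by rw [← hay, Finset.erase_insert ha]⟩
    · intro s hs
      obtain ⟨a, ha, rfl⟩ := Finset.mem_image.1 (Finset.mem_coe.1 hs)
      obtain ⟨y, hy⟩ := Slice.exists_supp (m := m) (x.supp.erase a)
        (by rw [Finset.card_erase_of_mem ha, ht]; rfl)
      exact ⟨y, by simp [hy, Finset.erase_subset], hy⟩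
  · rw [zeroExt_of_card_ne _ _ ht, cubeUp]
    refine (Finset.sum_eq_zero fun j hj => zeroExt_of_card_ne _ _ ?_).symm
    have := Finset.card_erase_add_one hj
    omega

lemma cubeDown_zeroExt_eq_zero {n m : ℕ} (f : Slice n m → ℝ)
    (hf : (downOp n m).mulVec f = 0) : cubeDown (zeroExt f) = 0 := by
  funext t
  by_cases ht : t.card + 1 = m
  · subst ht
    obtain ⟨x, hx⟩ := Slice.exists_supp (m := t.card + 1 - 1) t rfl
    have h := congrFun hf x
    rw [Pi.zero_apply] at h
    rw [Pi.zero_apply, ← h, cubeDown]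
    have hinj : Set.InjOn (fun j => insert j t) (tᶜ : Finset (Fin n)) := by
      intro a ha b hb hab
      have ha' : a ∉ t := by simpa using ha
      have h1 : a ∈ insert b t := by
        rw [← show insert a t = insert b t from hab]; exact Finset.mem_insert_self a t
      exact (Finset.mem_insert.1 h1).resolve_right ha'
    rw [← Finset.sum_image (f := zeroExt f) hinj]
    simp only [Matrix.mulVec, dotProduct, downOp, Matrix.of_apply, Slice.le_iff, ite_mul, one_mul,
      zero_mul, Nat.succ_pos, true_and, hx]
    rw [← Finset.sum_filter]
    symm
    refine Finset.sum_nbij Slice.supp ?_ Slice.supp_injective.injOn ?_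
      fun y _ => (zeroExt_supp f y).symm
    · intro y hy
      obtain ⟨a, ha, hay⟩ := Finset.exists_eq_insert_iff.2
        ⟨(Finset.mem_filter.1 hy).2, by rw [y.card_supp]⟩
      exact Finset.mem_image.2 ⟨a, by simpa using ha, hay⟩
    · intro s hs
      obtain ⟨a, ha, rfl⟩ := Finset.mem_image.1 (Finset.mem_coe.1 hs)
      obtain ⟨y, hy⟩ := Slice.exists_supp (m := t.card + 1) (insert a t)
        (Finset.card_insert_of_notMem (by simpa using ha))
      exact ⟨y, by simp [hy, Finset.subset_insert], hy⟩
  · refine Finset.sum_eq_zero fun j hj => zeroExt_of_card_ne _ _ ?_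
    rwa [Finset.card_insert_of_notMem (by simpa using hj)]

/-! ### Adjointness and the commutation relation -/

/-- The up and down operators are adjoint. -/
lemma sum_cubeUp_mul {n : ℕ} (F G : Finset (Fin n) → ℝ) :
    ∑ t, cubeUp F t * G t = ∑ t, F t * cubeDown G t := by
  simp only [cubeUp, cubeDown, Finset.sum_mul, Finset.mul_sum]
  rw [Finset.sum_sigma', Finset.sum_sigma']
  refine Finset.sum_bij' (fun p _ => ⟨p.1.erase p.2, p.2⟩) (fun p _ => ⟨insert p.2 p.1, p.2⟩)
    ?_ ?_ ?_ ?_ ?_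
  · rintro ⟨t, j⟩ h
    simp
  · rintro ⟨t, j⟩ h
    simp
  · rintro ⟨t, j⟩ h
    have hj : j ∈ t := by simpa using h
    simp [Finset.insert_erase hj]
  · rintro ⟨t, j⟩ h
    have hj : j ∉ t := by simpa using h
    simp [Finset.erase_insert hj]
  · rintro ⟨t, j⟩ h
    have hj : j ∈ t := by simpa using h
    simp [Finset.insert_erase hj]

/-- The `sl₂` commutation relation. The terms of both compositions that move an element `l ∈ t` out
and another element `j ∉ t` in coincide; what remains is the `n - |t|`, respectively `|t|`, terms
that return to `t`. -/
lemma cubeDown_cubeUp {n : ℕ} (F : Finset (Fin n) → ℝ) (t : Finset (Fin n)) :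
    cubeDown (cubeUp F) t = cubeUp (cubeDown F) t + ((n : ℝ) - 2 * t.card) * F t := by
  have h1 : cubeDown (cubeUp F) t
      = ∑ j ∈ tᶜ, (F t + ∑ l ∈ t, F ((insert j t).erase l)) := by
    refine Finset.sum_congr rfl fun j hj => ?_
    have hj : j ∉ t := by simpa using hj
    rw [cubeUp, Finset.sum_insert hj, Finset.erase_insert hj]
  have h2 : cubeUp (cubeDown F) t
      = ∑ l ∈ t, (F t + ∑ j ∈ tᶜ, F ((insert j t).erase l)) := by
    refine Finset.sum_congr rfl fun l hl => ?_
    have hl' : l ∉ tᶜ := by simpa using hl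
    rw [cubeDown, Finset.compl_erase, Finset.sum_insert hl', Finset.insert_erase hl]
    congr 1
    refine Finset.sum_congr rfl fun j hj => ?_
    have hjl : j ≠ l := fun h => hl' (h ▸ hj)
    rw [Finset.erase_insert_of_ne hjl]
  have hc : ((tᶜ : Finset (Fin n)).card : ℝ) = n - t.card := by
    rw [Finset.card_compl, Fintype.card_fin, Nat.cast_sub]
    simpa using Finset.card_le_univ t
  rw [h1, h2, Finset.sum_add_distrib, Finset.sum_add_distrib, Finset.sum_comm (s := t),
    Finset.sum_const, Finset.sum_const, nsmul_eq_mul, nsmul_eq_mul, hc]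
  ring

/-! ### Iterating the up operator on harmonic functions -/

lemma cubeUp_eq_zero_of_card_ne {n m : ℕ} {F : Finset (Fin n) → ℝ}
    (hF : ∀ t, t.card ≠ m → F t = 0) (t : Finset (Fin n)) (ht : t.card ≠ m + 1) :
    cubeUp F t = 0 := by
  refine Finset.sum_eq_zero fun j hj => hF _ ?_
  have := Finset.card_erase_add_one hj
  omega

lemma cubeUp_iterate_eq_zero_of_card_ne {n m : ℕ} {F : Finset (Fin n) → ℝ}
    (hF : ∀ t, t.card ≠ m → F t = 0) (d : ℕ) (t : Finset (Fin n)) (ht : t.card ≠ m + d) :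
    cubeUp^[d] F t = 0 := by
  induction d generalizing t with
  | zero => exact hF t ht
  | succ d ih =>
    rw [Function.iterate_succ_apply']
    exact cubeUp_eq_zero_of_card_ne ih t ht

/-- On a harmonic function of level `i`, going up `d + 1` steps and then down one step is going up
`d` steps, up to a factor that does not depend on the function. -/
lemma cubeDown_iterate (n i d : ℕ) : ∃ c : ℝ, ∀ F : Finset (Fin n) → ℝ,
    (∀ t, t.card ≠ i → F t = 0) → cubeDown F = 0 →
    cubeDown (cubeUp^[d + 1] F) = c • cubeUp^[d] F := by
  have key : ∀ (F : Finset (Fin n) → ℝ), (∀ t, t.card ≠ i → F t = 0) → ∀ d t,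
      cubeDown (cubeUp (cubeUp^[d] F)) t
        = cubeUp (cubeDown (cubeUp^[d] F)) t
          + ((n : ℝ) - 2 * ((i + d : ℕ) : ℝ)) * cubeUp^[d] F t := by
    intro F hF d t
    rw [cubeDown_cubeUp]
    by_cases ht : t.card = i + d
    · rw [ht]
    · rw [cubeUp_iterate_eq_zero_of_card_ne hF d t ht, mul_zero, mul_zero]
  induction d with
  | zero =>
    refine ⟨(n : ℝ) - 2 * ((i + 0 : ℕ) : ℝ), fun F hF h0 => funext fun t => ?_⟩
    have h := key F hF 0 t
    rw [Function.iterate_zero_apply, h0] at h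
    rw [Function.iterate_succ_apply', Function.iterate_zero_apply, h]
    simp [cubeUp]
  | succ d ih =>
    obtain ⟨c, hc⟩ := ih
    refine ⟨c + ((n : ℝ) - 2 * ((i + (d + 1) : ℕ) : ℝ)), fun F hF h0 => funext fun t => ?_⟩
    rw [Function.iterate_succ_apply', key F hF (d + 1) t, hc F hF h0, Pi.smul_apply, smul_eq_mul,
      add_mul, Function.iterate_succ_apply' cubeUp d F]
    congr 1
    simp [cubeUp, Finset.mul_sum]

/-- It suffices that one of the two functions is harmonic, since the down operator is only ever
moved onto `G`. -/
lemma sum_cubeUp_iterate_mul {n i : ℕ} {F G : Finset (Fin n) → ℝ}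
    (hG : ∀ t, t.card ≠ i → G t = 0) (hG0 : cubeDown G = 0)
    (h : ∑ t, F t * G t = 0) (d : ℕ) : ∑ t, cubeUp^[d] F t * cubeUp^[d] G t = 0 := by
  induction d with
  | zero => exact h
  | succ d ih =>
    obtain ⟨c, hc⟩ := cubeDown_iterate n i d
    rw [Function.iterate_succ_apply' cubeUp d F, sum_cubeUp_mul, hc G hG hG0]
    simp only [Pi.smul_apply, smul_eq_mul, mul_left_comm _ c]
    rw [← Finset.mul_sum, ih, mul_zero]

/-! ### Transfer to the slices -/

/-- Extension by zero preserves the inner product. -/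
lemma sum_zeroExt_mul {n m : ℕ} (f g : Slice n m → ℝ) :
    ∑ t, zeroExt f t * zeroExt g t = ∑ x, f x * g x := by
  symm
  refine Finset.sum_of_injOn Slice.supp Slice.supp_injective.injOn (by simp) ?_ ?_
  · intro t _ ht
    rw [zeroExt_of_card_ne f t, zero_mul]
    intro hc
    obtain ⟨x, hx⟩ := Slice.exists_supp t hc
    exact ht ⟨x, by simp, hx⟩
  · intro x _
    rw [zeroExt_supp, zeroExt_supp]

lemma zeroExt_upPathAux {n i : ℕ} (v : Slice n i → ℝ) (d : ℕ) :
    zeroExt ((upPathAux n i d).mulVec v) = cubeUp^[d] (zeroExt v) := by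
  induction d with
  | zero => exact congrArg zeroExt (Matrix.one_mulVec v)
  | succ d ih =>
    rw [Function.iterate_succ_apply', ← ih, ← zeroExt_upOp, Matrix.mulVec_mulVec]
    rfl

lemma zeroExt_upPath {n i k : ℕ} (hik : i ≤ k) (v : Slice n i → ℝ) :
    zeroExt ((upPath n i k).mulVec v) = cubeUp^[k - i] (zeroExt v) := by
  -- With `k - i` generalized to `d`, substituting `k = i + d` makes the cast disappear.
  have aux : ∀ (d : ℕ) (_ : i + d = k)
      (h : Matrix (Slice n (i + d)) (Slice n i) ℝ = Matrix (Slice n k) (Slice n i) ℝ),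
      zeroExt ((cast h (upPathAux n i d)).mulVec v) = cubeUp^[d] (zeroExt v) := by
    intro d e h
    subst e
    exact zeroExt_upPathAux v d
  rw [upPath, dif_pos hik]
  exact aux _ (Nat.add_sub_cancel' hik) _


/-- If `⟨v₁, v₂⟩ = 0` and `P↓_{n,i} v₁ = P↓_{n,i} v₂ = 0`, then
`⟨P↑_{n,i,k} v₁, P↑_{n,i,k} v₂⟩ = 0`. -/
theorem stmt4 (n i k : ℕ) (hik : i ≤ k) (hkn : k ≤ n) (v₁ v₂ : Slice n i → ℝ)
    (hortho : ∑ x, v₁ x * v₂ x = 0)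
    (h₁ : (downOp n i).mulVec v₁ = 0) (h₂ : (downOp n i).mulVec v₂ = 0) :
    ∑ x, (upPath n i k).mulVec v₁ x * (upPath n i k).mulVec v₂ x = 0 := by
  rw [← sum_zeroExt_mul, zeroExt_upPath hik, zeroExt_upPath hik]
  exact sum_cubeUp_iterate_mul (zeroExt_of_card_ne v₂)
    (cubeDown_zeroExt_eq_zero v₂ h₂) (by rw [sum_zeroExt_mul, hortho]) _
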